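/- Let H be a finite-dimensional complex inner product space, N ∈ ℕ, let X_1,…,X_N be pairwise commuting binary observables on H and Z_1,…,Z_N be pairwise commuting binary observables on H. Then the extraction map preserves norms: for every ψ ∈ H, the extracted global vector Φ := 2^{−N} Σ_{r,s ∈ {0,1}^N} (X(r)Z(s) ⊗ σx(r)σz(s) ⊗ Id_{Q_N})(ψ ⊗ φ+_N) satisfies ‖Φ‖ = ‖ψ‖. -/

import Mathlib

open scoped Matrix Kronecker ComplexConjugate

noncomputable section

/-- Bit vectors of length `N`, i.e. elements of `{0,1}^N`. -/
abbrev BV (N : ℕ) := Fin N → Bool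

/-- The space `Q_N` of functions `{0,1}^N → ℂ`. -/
abbrev QV (N : ℕ) := BV N → ℂ

/-- Linear operators on `Q_N`, represented as matrices in the standard basis. -/
abbrev QOp (N : ℕ) := Matrix (BV N) (BV N) ℂ

/-- Bitwise XOR of bit vectors. -/
def bvXor {N : ℕ} (x r : BV N) : BV N := fun i => xor (x i) (r i)

/-- The sign `(-1)^{s·x}` where `s·x = Σ_i s_i x_i mod 2`. -/
def bSign {N : ℕ} (s x : BV N) : ℂ :=
  (-1 : ℂ) ^ (Finset.univ.filter fun i => s i = true ∧ x i = true).card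

/-- The standard basis vector `e_x` of `Q_N`. -/
def eVec {N : ℕ} (x : BV N) : QV N := fun y => if y = x then 1 else 0

/-- Tensor product of two vectors (as functions). -/
def tensVec {α β : Type*} (f : α → ℂ) (g : β → ℂ) : α × β → ℂ := fun p => f p.1 * g p.2

/-- The Pauli parity operator `σx(r)`, sending `e_x` to `e_{x ⊕ r}`. -/
def sigmaX {N : ℕ} (r : BV N) : QOp N :=
  Matrix.of fun y x => if y = bvXor x r then 1 else 0

/-- The Pauli parity operator `σz(s)`, sending `e_x` to `(-1)^{s·x} e_x`. -/
def sigmaZ {N : ℕ} (s : BV N) : QOp N :=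
  Matrix.diagonal fun x => bSign s x

/-- The scalar `2^{-N/2}`. -/
def invSqrt2pow (N : ℕ) : ℂ := (((Real.sqrt 2)⁻¹ : ℝ) : ℂ) ^ N

/-- The maximally entangled state `φ⁺_N = 2^{-N/2} Σ_x e_x ⊗ e_x`. -/
def phiPlus (N : ℕ) : BV N × BV N → ℂ :=
  invSqrt2pow N • ∑ x : BV N, tensVec (eVec x) (eVec x)

/-- The standard (complex) inner product on a finite function space. -/
def qInner {α : Type*} [Fintype α] (f g : α → ℂ) : ℂ :=
  ∑ x, (starRingEnd ℂ) (f x) * g x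

/-- The norm associated to `qInner`. -/
def qNorm {α : Type*} [Fintype α] (f : α → ℂ) : ℝ :=
  Real.sqrt (qInner f f).re

/-- A binary observable: a self-adjoint operator squaring to the identity. -/
def IsBinaryObs {ι : Type*} [Fintype ι] [DecidableEq ι] (O : Matrix ι ι ℂ) : Prop :=
  O.IsHermitian ∧ O * O = 1

/-- For pairwise commuting operators `X i`, the parity product `X(r) = ∏_{i : r_i = 1} X_i`. -/
def obsProd {n : ℕ} {ι : Type*} [Fintype ι] [DecidableEq ι]
    (X : Fin n → Matrix ι ι ℂ) (hX : ∀ i j, Commute (X i) (X j)) (r : BV n) :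
    Matrix ι ι ℂ :=
  (Finset.univ.filter fun i => r i = true).noncommProd X fun i _ j _ _ => hX i j

/-- The set of bit vectors supported on `R`. -/
def suppSet {N : ℕ} (R : Finset (Fin N)) : Finset (BV N) :=
  Finset.univ.filter fun u => ∀ i, u i = true → i ∈ R

/-- The projector `Π^{σx}_u = 2^{-|R|} Σ_{u' supported on R} (-1)^{u·u'} σx(u')`. -/
def projPauliX {N : ℕ} (R : Finset (Fin N)) (u : BV N) : QOp N :=
  ((2 : ℂ) ^ R.card)⁻¹ • ∑ u' ∈ suppSet R, bSign u u' • sigmaX u'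

/-- The projector `Π^{σz}_v = 2^{-|S|} Σ_{v' supported on S} (-1)^{v·v'} σz(v')`. -/
def projPauliZ {N : ℕ} (S : Finset (Fin N)) (v : BV N) : QOp N :=
  ((2 : ℂ) ^ S.card)⁻¹ • ∑ v' ∈ suppSet S, bSign v v' • sigmaZ v'

/-- The projector `Π^X_u = 2^{-|R|} Σ_{u' supported on R} (-1)^{u·u'} X(u')`
for a family of commuting binary observables. -/
def projObs {N : ℕ} {ι : Type*} [Fintype ι] [DecidableEq ι]
    (X : Fin N → Matrix ι ι ℂ) (hX : ∀ i j, Commute (X i) (X j))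
    (R : Finset (Fin N)) (u : BV N) : Matrix ι ι ℂ :=
  ((2 : ℂ) ^ R.card)⁻¹ • ∑ u' ∈ suppSet R, bSign u u' • obsProd X hX u'

/-- The extracted global vector
`Φ = 2^{-N} Σ_{r,s} (X(r)Z(s) ⊗ σx(r)σz(s) ⊗ Id)(ψ ⊗ φ⁺_N)`. -/
def extractedVec {N : ℕ} {ι : Type*} [Fintype ι] [DecidableEq ι]
    (X Z : Fin N → Matrix ι ι ℂ)
    (hX : ∀ i j, Commute (X i) (X j)) (hZ : ∀ i j, Commute (Z i) (Z j))
    (ψ : ι → ℂ) : ι × BV N × BV N → ℂ :=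
  ((2 : ℂ) ^ N)⁻¹ • ∑ r : BV N, ∑ s : BV N,
    ((obsProd X hX r * obsProd Z hZ s) ⊗ₖ ((sigmaX r * sigmaZ s) ⊗ₖ (1 : QOp N))).mulVec
      (tensVec ψ (phiPlus N))


theorem aux_bSign_prod {N : ℕ} (s x : BV N) :
    bSign s x = ∏ i, (if s i = true ∧ x i = true then (-1 : ℂ) else 1) := by
  unfold bSign
  rw [Finset.prod_ite]
  simp

theorem aux_bSign_orth {N : ℕ} (s s' : BV N) :
    ∑ x : BV N, bSign s x * bSign s' x = if s = s' then (2 : ℂ) ^ N else 0 := by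
  simp only [aux_bSign_prod, ← Finset.prod_mul_distrib]
  have h := Finset.prod_univ_sum (fun _ : Fin N => (Finset.univ : Finset Bool))
    (fun i b => (if s i = true ∧ b = true then (-1 : ℂ) else 1) *
      (if s' i = true ∧ b = true then (-1 : ℂ) else 1))
  rw [Fintype.piFinset_univ] at h
  rw [← h]
  have h2 : ∀ i, (∑ b : Bool, (if s i = true ∧ b = true then (-1 : ℂ) else 1) *
      (if s' i = true ∧ b = true then (-1 : ℂ) else 1)) = if s i = s' i then 2 else 0 := by
    intro i
    cases s i <;> cases s' i <;> norm_num
  simp only [h2]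
  split_ifs with hs
  · subst hs; simp
  · obtain ⟨i, hi⟩ := Function.ne_iff.mp hs
    exact Finset.prod_eq_zero (Finset.mem_univ i) (by simp [hi])

theorem aux_bSign_conj {N : ℕ} (s x : BV N) : (starRingEnd ℂ) (bSign s x) = bSign s x := by
  simp [bSign]

theorem aux_phi {N : ℕ} (y x : BV N) :
    phiPlus N (y, x) = if y = x then invSqrt2pow N else 0 := by
  simp only [phiPlus, Pi.smul_apply, Finset.sum_apply, tensVec, eVec, smul_eq_mul]
  simp [eq_comm]

def auxB {N : ℕ} (r s : BV N) : BV N × BV N → ℂ := fun p =>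
  if p.1 = bvXor p.2 r then bSign s p.2 * invSqrt2pow N else 0

theorem aux_mulVec {N : ℕ} {ι : Type*} [Fintype ι] [DecidableEq ι] (M : Matrix ι ι ℂ)
    (ψ : ι → ℂ) (r s : BV N) :
    (M ⊗ₖ ((sigmaX r * sigmaZ s) ⊗ₖ (1 : QOp N))).mulVec (tensVec ψ (phiPlus N))
      = tensVec (M.mulVec ψ) (auxB r s) := by
  funext ⟨i, y, x⟩
  simp only [Matrix.mulVec, dotProduct, tensVec, Matrix.kroneckerMap_apply,
    Fintype.sum_prod_type, aux_phi, sigmaX, sigmaZ, Matrix.mul_diagonal, Matrix.of_apply,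
    Matrix.one_apply, auxB, Finset.sum_mul]
  refine Finset.sum_congr rfl fun j _ => ?_
  rw [Finset.sum_eq_single x]
  · rw [Finset.sum_eq_single x]
    · split_ifs <;> simp_all <;> ring
    · intro b _ hb; simp [hb.symm]
    · simp
  · intro b _ hb
    refine Finset.sum_eq_zero fun c _ => ?_
    by_cases h1 : x = c
    · subst h1; simp [hb]
    · simp [h1]
  · simp

theorem aux_xor_inj {N : ℕ} (x r r' : BV N) : bvXor x r = bvXor x r' ↔ r = r' := by
  constructor
  · intro h
    funext i
    have := congrFun h i
    simpa [bvXor] using this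
  · rintro rfl; rfl

theorem aux_c {N : ℕ} : (starRingEnd ℂ) (invSqrt2pow N) * invSqrt2pow N = ((2 : ℂ) ^ N)⁻¹ := by
  unfold invSqrt2pow
  rw [map_pow, Complex.conj_ofReal, ← mul_pow, ← Complex.ofReal_mul, ← mul_inv,
    Real.mul_self_sqrt (by norm_num)]
  simp

theorem aux_B_orth {N : ℕ} (r s r' s' : BV N) :
    qInner (auxB r s) (auxB r' s') = if r = r' ∧ s = s' then 1 else 0 := by
  unfold qInner auxB
  rw [Fintype.sum_prod_type_right]
  have h : ∀ x : BV N, (∑ y : BV N,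
      (starRingEnd ℂ) (if y = bvXor x r then bSign s x * invSqrt2pow N else 0) *
      (if y = bvXor x r' then bSign s' x * invSqrt2pow N else 0))
      = if r = r' then ((2 : ℂ) ^ N)⁻¹ * (bSign s x * bSign s' x) else 0 := by
    intro x
    rw [Finset.sum_eq_single (bvXor x r)]
    · simp only [if_true, aux_xor_inj, map_mul, aux_bSign_conj, ← aux_c]
      split_ifs
      · ring
      · simp
    · intro b _ hb; simp [hb]
    · simp
  simp only [h]
  by_cases hr : r = r'
  · simp only [hr, if_true, true_and]
    rw [← Finset.mul_sum, aux_bSign_orth]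
    split_ifs <;> simp
  · simp [hr]

theorem aux_tens {α β : Type*} [Fintype α] [Fintype β] (f f' : α → ℂ) (g g' : β → ℂ) :
    qInner (tensVec f g) (tensVec f' g') = qInner f f' * qInner g g' := by
  simp only [qInner, tensVec, Fintype.sum_prod_type, Finset.sum_mul_sum, map_mul]
  refine Finset.sum_congr rfl fun _ _ => Finset.sum_congr rfl fun _ _ => by ring

theorem aux_inner_sum {α κ : Type*} [Fintype α] [Fintype κ] (f : κ → α → ℂ) (c : ℂ) :
    qInner (c • ∑ k, f k) (c • ∑ k, f k)
      = (starRingEnd ℂ) c * c * ∑ k, ∑ l, qInner (f k) (f l) := by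
  have h : ∀ u v : α → ℂ, qInner u v = star u ⬝ᵥ v := fun u v => rfl
  simp only [h, star_smul, star_sum, smul_dotProduct, dotProduct_smul, sum_dotProduct,
    dotProduct_sum, smul_eq_mul, ← Finset.mul_sum]
  rw [Finset.sum_comm, starRingEnd_apply]
  ring

theorem aux_obs_unitary {N : ℕ} {ι : Type*} [Fintype ι] [DecidableEq ι]
    (X : Fin N → Matrix ι ι ℂ) (hXobs : ∀ i, IsBinaryObs (X i))
    (hX : ∀ i j, Commute (X i) (X j)) (r : BV N) :
    obsProd X hX r ∈ unitary (Matrix ι ι ℂ) := by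
  refine Submonoid.noncommProd_mem _ _ _ _ fun i _ => ?_
  obtain ⟨h1, h2⟩ := hXobs i
  have h3 : star (X i) = X i := h1
  rw [Unitary.mem_iff, h3]
  exact ⟨h2, h2⟩

theorem aux_unitary_inner {ι : Type*} [Fintype ι] [DecidableEq ι] (M : Matrix ι ι ℂ)
    (hM : M ∈ unitary (Matrix ι ι ℂ)) (ψ : ι → ℂ) :
    qInner (M.mulVec ψ) (M.mulVec ψ) = qInner ψ ψ := by
  have h : ∀ u v : ι → ℂ, qInner u v = star u ⬝ᵥ v := fun u v => rfl
  have h2 : Mᴴ * M = 1 := (Unitary.mem_iff.mp hM).1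
  rw [h, h, Matrix.star_mulVec, Matrix.dotProduct_mulVec, Matrix.vecMul_vecMul, h2,
    Matrix.vecMul_one]

/-- the extraction map preserves norms: `‖Φ‖ = ‖ψ‖`. -/
theorem extractedVec_norm {N : ℕ} {ι : Type*} [Fintype ι] [DecidableEq ι]
    (X Z : Fin N → Matrix ι ι ℂ)
    (hXobs : ∀ i, IsBinaryObs (X i)) (hZobs : ∀ i, IsBinaryObs (Z i))
    (hX : ∀ i j, Commute (X i) (X j)) (hZ : ∀ i j, Commute (Z i) (Z j))
    (ψ : ι → ℂ) :
    qNorm (extractedVec X Z hX hZ ψ) = qNorm ψ := by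
  have key : qInner (extractedVec X Z hX hZ ψ) (extractedVec X Z hX hZ ψ) = qInner ψ ψ := by
    unfold extractedVec
    simp only [aux_mulVec]
    rw [← Fintype.sum_prod_type' (f := fun r s : BV N =>
      tensVec ((obsProd X hX r * obsProd Z hZ s).mulVec ψ) (auxB r s)), aux_inner_sum]
    have h : ∀ k l : BV N × BV N,
        qInner (tensVec ((obsProd X hX k.1 * obsProd Z hZ k.2).mulVec ψ) (auxB k.1 k.2))
          (tensVec ((obsProd X hX l.1 * obsProd Z hZ l.2).mulVec ψ) (auxB l.1 l.2))
        = if k = l then qInner ψ ψ else 0 := by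
      intro k l
      rw [aux_tens, aux_B_orth]
      by_cases hkl : k = l
      · subst hkl
        rw [aux_unitary_inner _ (mul_mem (aux_obs_unitary X hXobs hX _)
          (aux_obs_unitary Z hZobs hZ _))]
        simp
      · rw [if_neg hkl, if_neg (fun h => hkl (Prod.ext h.1 h.2)), mul_zero]
    simp only [h]
    have h2 : (starRingEnd ℂ) 2 = 2 := Complex.conj_ofNat 2
    simp [h2]
    field_simp
  unfold qNorm
  rw [key]

end
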